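/- arXiv:2401.11494 — 13 statements merged into one kernel-verified Lean document; each statement's English description precedes it below -/
import Mathlib

section
/- Let A, B ∈ ℂ^{m×n}, and let X ∈ ℂ^{n×m} be the Moore–Penrose inverse of A and Y ∈ ℂ^{n×m} be the Moore–Penrose inverse of B. Then the following are equivalent: (a) A ≤⋄ B; (b) R(B*) = R(A*) + R(Y − X) and R(A*) ∩ R(Y − X) = {0}; (c) R(A*) ∩ R(Y − X) = {0} and R(A*) ⊆ R(B*). -/
open Matrix

noncomputable section

/-- Column space of a complex matrix: the range of `x ↦ M x`. -/
def colSpace {m n : ℕ} (M : Matrix (Fin m) (Fin n) ℂ) : Submodule ℂ (Fin m → ℂ) :=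
  LinearMap.range M.mulVecLin

/-- `X` is the Moore–Penrose inverse of `M`. -/
def IsMP {m n : ℕ} (M : Matrix (Fin m) (Fin n) ℂ) (X : Matrix (Fin n) (Fin m) ℂ) : Prop :=
  M * X * M = M ∧ X * M * X = X ∧ (M * X)ᴴ = M * X ∧ (X * M)ᴴ = X * M

/-- Diamond partial order: `R(A) ⊆ R(B)`, `R(A*) ⊆ R(B*)` and `A B* A = A A* A`. -/
def diamondLE {m n : ℕ} (A B : Matrix (Fin m) (Fin n) ℂ) : Prop :=
  colSpace A ≤ colSpace B ∧ colSpace Aᴴ ≤ colSpace Bᴴ ∧ A * Bᴴ * A = A * Aᴴ * A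

/-- Star partial order: `A* A = A* B` and `A A* = B A*`. -/
def starLE {m n : ℕ} (A B : Matrix (Fin m) (Fin n) ℂ) : Prop :=
  Aᴴ * A = Aᴴ * B ∧ A * Aᴴ = B * Aᴴ

/-- Minus partial order: there is an inner inverse `G` of `A` with `G A = G B` and `A G = B G`. -/
def minusLE {m n : ℕ} (A B : Matrix (Fin m) (Fin n) ℂ) : Prop :=
  ∃ G : Matrix (Fin n) (Fin m) ℂ, A * G * A = A ∧ G * A = G * B ∧ A * G = B * G

/-- Space pre-order: `R(A) ⊆ R(B)` and `R(A*) ⊆ R(B*)`. -/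
def spaceLE {m n : ℕ} (A B : Matrix (Fin m) (Fin n) ℂ) : Prop :=
  colSpace A ≤ colSpace B ∧ colSpace Aᴴ ≤ colSpace Bᴴ

/-- Left star partial order: `A* A = A* B` and `R(A) ⊆ R(B)`. -/
def leftStarLE {m n : ℕ} (A B : Matrix (Fin m) (Fin n) ℂ) : Prop :=
  Aᴴ * A = Aᴴ * B ∧ colSpace A ≤ colSpace B

/-- Right star partial order: `A A* = B A*` and `R(A*) ⊆ R(B*)`. -/
def rightStarLE {m n : ℕ} (A B : Matrix (Fin m) (Fin n) ℂ) : Prop :=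
  A * Aᴴ = B * Aᴴ ∧ colSpace Aᴴ ≤ colSpace Bᴴ

/-- The canonical equivalence `Fin r ⊕ Fin (n - r) ≃ Fin n` when `r ≤ n`. -/
def finPairEquiv {r n : ℕ} (h : r ≤ n) : Fin r ⊕ Fin (n - r) ≃ Fin n :=
  finSumFinEquiv.trans (finCongr (Nat.add_sub_cancel' h))

/-- The canonical equivalence `(Fin t ⊕ Fin (r - t)) ⊕ Fin (m - r) ≃ Fin m`
when `t ≤ r ≤ m`. -/
def finTriEquiv {t r m : ℕ} (ht : t ≤ r) (hr : r ≤ m) :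
    (Fin t ⊕ Fin (r - t)) ⊕ Fin (m - r) ≃ Fin m :=
  (Equiv.sumCongr (finPairEquiv ht) (Equiv.refl (Fin (m - r)))).trans (finPairEquiv hr)


theorem colSpace_mul_le {m n k : ℕ} (P : Matrix (Fin m) (Fin n) ℂ)
    (Z : Matrix (Fin n) (Fin k) ℂ) : colSpace (P * Z) ≤ colSpace P := by
  rintro _ ⟨v, rfl⟩
  exact ⟨Z *ᵥ v, by simp [Matrix.mulVec_mulVec]⟩

theorem mul_eq_of_colSpace_le {m n k : ℕ} {P : Matrix (Fin m) (Fin k) ℂ}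
    {Q : Matrix (Fin m) (Fin n) ℂ} {E : Matrix (Fin m) (Fin m) ℂ}
    (h : colSpace P ≤ colSpace Q) (hE : E * Q = Q) : E * P = P := by
  apply Matrix.ext_of_mulVec_single
  intro i
  obtain ⟨w, hw⟩ := h ⟨Pi.single i 1, rfl⟩
  simp only [Matrix.mulVecLin_apply] at hw
  rw [← Matrix.mulVec_mulVec, ← hw, Matrix.mulVec_mulVec, hE]

theorem eq_zero_of_inf {m n k l : ℕ} {P : Matrix (Fin m) (Fin k) ℂ}
    {Q : Matrix (Fin m) (Fin n) ℂ} {M : Matrix (Fin m) (Fin l) ℂ}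
    (h : colSpace P ⊓ colSpace Q = ⊥) (h1 : colSpace M ≤ colSpace P)
    (h2 : colSpace M ≤ colSpace Q) : M = 0 := by
  apply Matrix.ext_of_mulVec_single
  intro i
  have : M *ᵥ Pi.single i 1 ∈ colSpace P ⊓ colSpace Q :=
    ⟨h1 ⟨_, rfl⟩, h2 ⟨_, rfl⟩⟩
  rw [h, Submodule.mem_bot] at this
  rw [this, Matrix.zero_mulVec]

theorem IsMP.ids {m n : ℕ} {A : Matrix (Fin m) (Fin n) ℂ} {X : Matrix (Fin n) (Fin m) ℂ}
    (h : IsMP A X) : Aᴴ * (A * X) = Aᴴ ∧ X * A * Aᴴ = Aᴴ ∧ X * Xᴴ * Aᴴ = X ∧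
      Aᴴ * Xᴴ * X = X := by
  obtain ⟨h1, h2, h3, h4⟩ := h
  refine ⟨?_, ?_, ?_, ?_⟩
  · rw [← h3, ← Matrix.conjTranspose_mul, h1]
  · rw [← h4, ← Matrix.conjTranspose_mul, ← Matrix.mul_assoc, h1]
  · rw [Matrix.mul_assoc, ← Matrix.conjTranspose_mul, h3, ← Matrix.mul_assoc, h2]
  · rw [← Matrix.conjTranspose_mul, h4, h2]

theorem IsMP.colSpace_eq {m n : ℕ} {A : Matrix (Fin m) (Fin n) ℂ}
    {X : Matrix (Fin n) (Fin m) ℂ} (h : IsMP A X) : colSpace Aᴴ = colSpace X := by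
  obtain ⟨-, h2, -, h4⟩ := h.ids
  apply le_antisymm
  · rw [← h2, Matrix.mul_assoc]; exact colSpace_mul_le _ _
  · rw [← h4, Matrix.mul_assoc]; exact colSpace_mul_le _ _

theorem diamond_iff_eqs {m n : ℕ} {A B : Matrix (Fin m) (Fin n) ℂ}
    {X Y : Matrix (Fin n) (Fin m) ℂ} (hX : IsMP A X) (hY : IsMP B Y) :
    diamondLE A B ↔ X * B * Y = X ∧ colSpace Aᴴ ≤ colSpace Bᴴ ∧ X * B * X = X := by
  obtain ⟨a1, a2, a3, a4⟩ := hX.ids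
  obtain ⟨c1, c2, c3, c4⟩ := hX
  obtain ⟨b1, b2, b3, b4⟩ := hY
  have e1 : colSpace A ≤ colSpace B ↔ X * B * Y = X := by
    constructor
    · intro h
      have h' : B * Y * A = A := mul_eq_of_colSpace_le h b1
      have h'' := congrArg conjTranspose h'
      rw [conjTranspose_mul, b3] at h''
      calc X * B * Y = X * Xᴴ * Aᴴ * B * Y := by rw [a3]
        _ = X * Xᴴ * (Aᴴ * (B * Y)) := by simp only [Matrix.mul_assoc]
        _ = X := by rw [h'', a3]
    · intro h
      have h' : B * Y * A = A := by
        have : Aᴴ * (B * Y) = Aᴴ := by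
          calc Aᴴ * (B * Y) = Aᴴ * (A * X) * (B * Y) := by rw [a1]
            _ = Aᴴ * (A * (X * B * Y)) := by simp only [Matrix.mul_assoc]
            _ = Aᴴ := by rw [h, a1]
        have h'' := congrArg conjTranspose this
        rwa [conjTranspose_mul, b3, conjTranspose_conjTranspose] at h''
      rw [← h', Matrix.mul_assoc]
      exact colSpace_mul_le _ _
  have e2 : A * Bᴴ * A = A * Aᴴ * A ↔ X * B * X = X := by
    rw [← conjTranspose_inj]
    simp only [conjTranspose_mul, conjTranspose_conjTranspose]
    constructor
    · intro h
      calc X * B * X = X * Xᴴ * Aᴴ * B * (Aᴴ * Xᴴ * X) := by rw [a3, a4]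
        _ = X * Xᴴ * (Aᴴ * (B * Aᴴ)) * Xᴴ * X := by simp only [Matrix.mul_assoc]
        _ = X * Xᴴ * Aᴴ * A * (Aᴴ * Xᴴ * X) := by rw [h]; simp only [Matrix.mul_assoc]
        _ = X := by rw [a3, a4, c2]
    · intro h
      calc Aᴴ * (B * Aᴴ) = Aᴴ * (A * X) * (B * (X * A * Aᴴ)) := by rw [a1, a2]
        _ = Aᴴ * A * (X * B * X) * A * Aᴴ := by simp only [Matrix.mul_assoc]
        _ = Aᴴ * (A * X) * A * Aᴴ := by rw [h]; simp only [Matrix.mul_assoc]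
        _ = Aᴴ * (A * Aᴴ) := by rw [a1]; simp only [Matrix.mul_assoc]
  unfold diamondLE
  rw [e1, e2]

theorem diamond_iff_range_direct_sum {m n : ℕ} (A B : Matrix (Fin m) (Fin n) ℂ)
    (X Y : Matrix (Fin n) (Fin m) ℂ) (hX : IsMP A X) (hY : IsMP B Y) :
    (diamondLE A B ↔
      (colSpace Bᴴ = colSpace Aᴴ ⊔ colSpace (Y - X) ∧
        colSpace Aᴴ ⊓ colSpace (Y - X) = ⊥)) ∧
    (diamondLE A B ↔
      (colSpace Aᴴ ⊓ colSpace (Y - X) = ⊥ ∧ colSpace Aᴴ ≤ colSpace Bᴴ)) := by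
  rw [diamond_iff_eqs hX hY, hX.colSpace_eq, hY.colSpace_eq]
  have hac : (X * B * Y = X ∧ colSpace X ≤ colSpace Y ∧ X * B * X = X) ↔
      (colSpace X ⊓ colSpace (Y - X) = ⊥ ∧ colSpace X ≤ colSpace Y) := by
    constructor
    · rintro ⟨h1, h2, h3⟩
      refine ⟨?_, h2⟩
      rw [eq_bot_iff]
      rintro v ⟨⟨u, hu⟩, ⟨w, hw⟩⟩
      simp only [Matrix.mulVecLin_apply] at hu hw
      have k1 : (X * B) *ᵥ v = v := by
        rw [← hu, Matrix.mulVec_mulVec, h3]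
      have k2 : (X * B) *ᵥ v = 0 := by
        rw [← hw, Matrix.mulVec_mulVec, Matrix.mul_sub, h1, h3, sub_self, Matrix.zero_mulVec]
      rw [Submodule.mem_bot, ← k1, k2]
    · rintro ⟨h1, h2⟩
      have hYX : Y * B * X = X := mul_eq_of_colSpace_le h2 hY.2.1
      have k1 : X * (1 - B * X) = 0 := by
        apply eq_zero_of_inf h1 (colSpace_mul_le _ _)
        have : X * (1 - B * X) = (Y - X) * (B * X) := by
          rw [Matrix.sub_mul, Matrix.mul_sub, Matrix.mul_one, ← Matrix.mul_assoc Y, hYX]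
        rw [this]; exact colSpace_mul_le _ _
      have k2 : X * (1 - B * Y) = 0 := by
        apply eq_zero_of_inf h1 (colSpace_mul_le _ _)
        have : X * (1 - B * Y) = (Y - X) * (B * Y - 1) := by
          rw [Matrix.sub_mul, Matrix.mul_sub Y, ← Matrix.mul_assoc Y, hY.2.1, Matrix.mul_one,
            sub_self, zero_sub, ← Matrix.mul_neg, neg_sub]
        rw [this]; exact colSpace_mul_le _ _
      rw [Matrix.mul_sub, Matrix.mul_one, sub_eq_zero, ← Matrix.mul_assoc] at k1 k2
      exact ⟨k2.symm, h2, k1.symm⟩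
  refine ⟨?_, hac⟩
  rw [hac]
  constructor
  · rintro ⟨h1, h2⟩
    refine ⟨le_antisymm ?_ (sup_le h2 ?_), h1⟩
    · rintro _ ⟨v, rfl⟩
      rw [Submodule.mem_sup]
      exact ⟨X *ᵥ v, ⟨v, rfl⟩, (Y - X) *ᵥ v, ⟨v, rfl⟩, by simp [Matrix.sub_mulVec]⟩
    · rintro _ ⟨v, rfl⟩
      rw [Matrix.mulVecLin_apply, Matrix.sub_mulVec]
      exact Submodule.sub_mem _ ⟨v, rfl⟩ (h2 ⟨v, rfl⟩)
  · rintro ⟨h1, h2⟩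
    exact ⟨h2, h1 ▸ le_sup_left⟩
end
end

section
/- Let A, B ∈ ℂ^{m×n}, and let X ∈ ℂ^{n×m} be the Moore–Penrose inverse of A and Y ∈ ℂ^{n×m} be the Moore–Penrose inverse of B. Then the following are equivalent: (a) A ≤⋄ B; (b) rank(Y − X) = rank((I_n − XA)·Y) and R(A*) ⊆ R(B*); (c) there exists an idempotent matrix Q ∈ ℂ^{n×n} (Q² = Q) with X = Q·Y, and R(A*) ⊆ R(B*). -/
open Matrix

noncomputable section

theorem aux_col {m n k : ℕ} (M : Matrix (Fin m) (Fin k) ℂ) (N : Matrix (Fin m) (Fin n) ℂ)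
    (G : Matrix (Fin n) (Fin m) ℂ) (h : N * G * N = N) :
    colSpace M ≤ colSpace N ↔ N * G * M = M := by
  constructor
  · intro hle
    apply Matrix.toLin'.injective
    apply LinearMap.ext
    intro v
    obtain ⟨w, hw⟩ := hle ⟨v, rfl⟩
    simp only [Matrix.mulVecLin_apply] at hw
    rw [Matrix.toLin'_apply, Matrix.toLin'_apply, ← Matrix.mulVec_mulVec, ← hw,
      Matrix.mulVec_mulVec, h]
  · rintro h2 _ ⟨v, rfl⟩
    refine ⟨(G * M) *ᵥ v, ?_⟩
    simp only [Matrix.mulVecLin_apply, Matrix.mulVec_mulVec]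
    rw [← Matrix.mul_assoc, h2]

theorem aux_ker {m n k : ℕ} (M : Matrix (Fin n) (Fin m) ℂ) (Z : Matrix (Fin n) (Fin n) ℂ)
    (h : M.rank = (Z * M).rank) (W : Matrix (Fin m) (Fin k) ℂ) (hW : Z * M * W = 0) :
    M * W = 0 := by
  have hle : LinearMap.ker M.mulVecLin ≤ LinearMap.ker (Z * M).mulVecLin := by
    intro v hv
    simp only [LinearMap.mem_ker, Matrix.mulVecLin_apply] at hv ⊢
    rw [← Matrix.mulVec_mulVec, hv, Matrix.mulVec_zero]
  have h1 := LinearMap.finrank_range_add_finrank_ker M.mulVecLin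
  have h2 := LinearMap.finrank_range_add_finrank_ker (Z * M).mulVecLin
  have heq := Submodule.eq_of_le_of_finrank_eq hle (by
    unfold Matrix.rank at h
    omega)
  apply Matrix.toLin'.injective
  apply LinearMap.ext
  intro v
  have : W *ᵥ v ∈ LinearMap.ker M.mulVecLin := by
    rw [heq]
    rw [LinearMap.mem_ker, Matrix.mulVecLin_apply, Matrix.mulVec_mulVec, hW, Matrix.zero_mulVec]
  simpa [Matrix.mulVec_mulVec] using this

theorem aux_key {m n : ℕ} (A B : Matrix (Fin m) (Fin n) ℂ)
    (X Y : Matrix (Fin n) (Fin m) ℂ) (hX : IsMP A X) (hY : IsMP B Y) :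
    (colSpace Aᴴ ≤ colSpace Bᴴ ↔ Y * B * X = X) ∧
    (diamondLE A B ↔ (X * B * X = X ∧ X * B * Y = X ∧ Y * B * X = X)) := by
  obtain ⟨x1, x2, x3, x4⟩ := hX
  obtain ⟨y1, y2, y3, y4⟩ := hY
  have e1 : X = X * Xᴴ * Aᴴ := by
    rw [Matrix.mul_assoc, ← conjTranspose_mul, x3, ← Matrix.mul_assoc, x2]
  have e2 : X = Aᴴ * Xᴴ * X := by
    rw [← conjTranspose_mul, x4, x2]
  have e3 : Aᴴ = X * A * Aᴴ := by
    rw [← x4, ← conjTranspose_mul, ← Matrix.mul_assoc, x1]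
  have e4 : Aᴴ = Aᴴ * A * X := by
    rw [Matrix.mul_assoc, ← x3, ← conjTranspose_mul, x1]
  have c1 : colSpace Aᴴ ≤ colSpace Bᴴ ↔ Y * B * X = X := by
    rw [aux_col Aᴴ Bᴴ Yᴴ (by
      rw [← conjTranspose_mul, ← conjTranspose_mul, ← Matrix.mul_assoc, y1]),
      ← conjTranspose_mul, y4]
    constructor
    · intro h
      rw [e2, ← Matrix.mul_assoc, ← Matrix.mul_assoc, h]
    · intro h
      rw [e3, ← Matrix.mul_assoc, ← Matrix.mul_assoc, h]
  have c2 : colSpace A ≤ colSpace B ↔ X * B * Y = X := by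
    rw [aux_col A B Y y1, ← conjTranspose_inj, conjTranspose_mul, y3]
    constructor
    · intro h
      calc X * B * Y = (X * Xᴴ * Aᴴ) * B * Y := by rw [← e1]
        _ = X * Xᴴ * (Aᴴ * (B * Y)) := by simp only [Matrix.mul_assoc]
        _ = X := by rw [h, ← e1]
    · intro h
      calc Aᴴ * (B * Y) = (Aᴴ * A * X) * (B * Y) := by rw [← e4]
        _ = Aᴴ * A * (X * B * Y) := by simp only [Matrix.mul_assoc]
        _ = Aᴴ := by rw [h, ← e4]
  have c3 : A * Bᴴ * A = A * Aᴴ * A ↔ X * B * X = X := by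
    rw [← conjTranspose_inj]
    simp only [conjTranspose_mul, conjTranspose_conjTranspose]
    constructor
    · intro h
      calc X * B * X = (X * Xᴴ * Aᴴ) * B * (Aᴴ * Xᴴ * X) := by rw [← e1, ← e2]
        _ = X * Xᴴ * (Aᴴ * (B * Aᴴ)) * Xᴴ * X := by simp only [Matrix.mul_assoc]
        _ = (X * Xᴴ * Aᴴ) * A * (Aᴴ * Xᴴ * X) := by rw [h]; simp only [Matrix.mul_assoc]
        _ = X := by rw [← e1, ← e2, x2]
    · intro h
      calc Aᴴ * (B * Aᴴ) = (Aᴴ * A * X) * (B * (X * A * Aᴴ)) := by rw [← e3, ← e4]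
        _ = Aᴴ * A * (X * B * X) * A * Aᴴ := by simp only [Matrix.mul_assoc]
        _ = (Aᴴ * A * X) * A * Aᴴ := by rw [h]
        _ = Aᴴ * (A * Aᴴ) := by rw [← e4, Matrix.mul_assoc]
  refine ⟨c1, ?_⟩
  unfold diamondLE
  rw [c1, c2, c3]
  tauto

theorem diamond_iff_rank_and_idempotent {m n : ℕ} (A B : Matrix (Fin m) (Fin n) ℂ)
    (X Y : Matrix (Fin n) (Fin m) ℂ) (hX : IsMP A X) (hY : IsMP B Y) :
    (diamondLE A B ↔
      ((Y - X).rank = ((1 - X * A) * Y).rank ∧ colSpace Aᴴ ≤ colSpace Bᴴ)) ∧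
    (diamondLE A B ↔
      ((∃ Q : Matrix (Fin n) (Fin n) ℂ, Q * Q = Q ∧ X = Q * Y) ∧
        colSpace Aᴴ ≤ colSpace Bᴴ)) := by
  obtain ⟨k1, k2⟩ := aux_key A B X Y hX hY
  rw [k1, k2]
  obtain ⟨x1, x2, x3, x4⟩ := hX
  obtain ⟨y1, y2, y3, y4⟩ := hY
  have f : (1 - X * A) * (Y - X) = (1 - X * A) * Y := by
    simp only [Matrix.mul_sub, Matrix.sub_mul, Matrix.one_mul, x2]
    abel
  constructor
  · constructor
    · rintro ⟨h1, h2, h3⟩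
      refine ⟨le_antisymm ?_ ?_, h3⟩
      · have g : (1 - X * B) * ((1 - X * A) * Y) = Y - X := by
          have : X * B * (X * A * Y) = X * A * Y := by
            rw [Matrix.mul_assoc X A Y, ← Matrix.mul_assoc (X * B), h1]
          simp only [Matrix.mul_sub, Matrix.sub_mul, Matrix.one_mul, h2, this]
          abel
        rw [← g]
        exact Matrix.rank_mul_le_right _ _
      · rw [← f]
        exact Matrix.rank_mul_le_right _ _
    · rintro ⟨h, h3⟩
      rw [← f] at h
      have a1 := aux_ker _ _ h (B * X) (by
        rw [f, Matrix.mul_assoc, ← Matrix.mul_assoc Y, h3, Matrix.sub_mul, x2, Matrix.one_mul,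
          sub_self])
      have a2 := aux_ker _ _ h (1 - B * Y) (by
        rw [f, Matrix.mul_assoc, Matrix.mul_sub, ← Matrix.mul_assoc Y, y2, Matrix.mul_one,
          sub_self, Matrix.mul_zero])
      rw [Matrix.sub_mul, ← Matrix.mul_assoc, ← Matrix.mul_assoc, h3, sub_eq_zero] at a1
      rw [Matrix.sub_mul, Matrix.mul_sub, Matrix.mul_sub, ← Matrix.mul_assoc, ← Matrix.mul_assoc,
        y2, Matrix.mul_one, Matrix.mul_one, sub_self, zero_sub, neg_eq_zero, sub_eq_zero] at a2
      exact ⟨a1.symm, a2.symm, h3⟩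
  · constructor
    · rintro ⟨h1, h2, h3⟩
      exact ⟨⟨X * B, by rw [← Matrix.mul_assoc, h1], h2.symm⟩, h3⟩
    · rintro ⟨⟨Q, hQ, hXQ⟩, h3⟩
      refine ⟨?_, ?_, h3⟩
      · calc X * B * X = Q * (Y * B * X) := by
              nth_rewrite 1 [hXQ]
              simp only [Matrix.mul_assoc]
          _ = X := by rw [h3, hXQ, ← Matrix.mul_assoc, hQ]
      · rw [hXQ, Matrix.mul_assoc, Matrix.mul_assoc, ← Matrix.mul_assoc Y, y2]
end
end

section
/- Let A, B ∈ ℂ^{m×n}, and let X ∈ ℂ^{n×m} be the Moore–Penrose inverse of A and Y ∈ ℂ^{n×m} be the Moore–Penrose inverse of B. If A ≤* B, then AX ≤* BY. -/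
open Matrix

noncomputable section

theorem star_le_projectors {m n : ℕ} (A B : Matrix (Fin m) (Fin n) ℂ)
    (X Y : Matrix (Fin n) (Fin m) ℂ) (hX : IsMP A X) (hY : IsMP B Y)
    (h : starLE A B) : starLE (A * X) (B * Y) := by
  obtain ⟨h1, h2, h3, h4⟩ := hX
  obtain ⟨k1, k2, k3, k4⟩ := hY
  obtain ⟨s1, s2⟩ := h
  have hXe : X = Aᴴ * (Xᴴ * X) := by
    rw [← Matrix.mul_assoc, ← Matrix.conjTranspose_mul, h4, h2]
  have hAB : A * X = B * X := by
    rw [hXe, ← Matrix.mul_assoc, s2, Matrix.mul_assoc]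
  have hl : B * Y * (A * X) = A * X := by
    rw [hAB, ← Matrix.mul_assoc, k1]
  have hr : A * X * (B * Y) = A * X := by
    have := congrArg Matrix.conjTranspose hl
    rwa [Matrix.conjTranspose_mul, h3, k3] at this
  have hi : A * X * (A * X) = A * X := by
    rw [← Matrix.mul_assoc, h1]
  exact ⟨by rw [h3, hi, hr], by rw [h3, hi, hl]⟩
end
end

section
/- Let A, B ∈ ℂ^{m×n}, and let X ∈ ℂ^{n×m} be the Moore–Penrose inverse of A and Y ∈ ℂ^{n×m} be the Moore–Penrose inverse of B. If A ≤⁻ B, then AX ≤⁻ BY. -/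
open Matrix

noncomputable section

theorem minus_le_projectors {m n : ℕ} (A B : Matrix (Fin m) (Fin n) ℂ)
    (X Y : Matrix (Fin n) (Fin m) ℂ) (hX : IsMP A X) (hY : IsMP B Y)
    (h : minusLE A B) : minusLE (A * X) (B * Y) := by
  obtain ⟨G, hG1, hG2, hG3⟩ := h
  obtain ⟨hX1, _, hX3, _⟩ := hX
  obtain ⟨hY1, _, hY3, _⟩ := hY
  have hA : B * (G * A) = A := by rw [← Matrix.mul_assoc, ← hG3, hG1]
  have hQA : B * Y * A = A := by
    calc B * Y * A = B * Y * (B * (G * A)) := by rw [hA]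
      _ = B * Y * B * (G * A) := by simp only [Matrix.mul_assoc]
      _ = A := by rw [hY1, hA]
  have hQP : B * Y * (A * X) = A * X := by rw [← Matrix.mul_assoc, hQA]
  have hPQ : A * X * (B * Y) = A * X := by
    have := congrArg conjTranspose hQP
    rwa [conjTranspose_mul, hX3, hY3] at this
  have hPP : A * X * (A * X) = A * X := by rw [← Matrix.mul_assoc, hX1]
  exact ⟨A * X, by rw [hPP, hPP], by rw [hPP, hPQ], by rw [hPP, hQP]⟩
end
end

section
/- Let A, B ∈ ℂ^{m×n}, and let X ∈ ℂ^{n×m} be the Moore–Penrose inverse of A and Y ∈ ℂ^{n×m} be the Moore–Penrose inverse of B. If A ≤⋄ B, then AX ≤⋄ BY. -/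
open Matrix

noncomputable section

theorem diamond_le_projectors {m n : ℕ} (A B : Matrix (Fin m) (Fin n) ℂ)
    (X Y : Matrix (Fin n) (Fin m) ℂ) (hX : IsMP A X) (hY : IsMP B Y)
    (h : diamondLE A B) : diamondLE (A * X) (B * Y) := by
  obtain ⟨a1, -, a3, -⟩ := hX
  obtain ⟨b1, -, b3, -⟩ := hY
  obtain ⟨h1, -, -⟩ := h
  have key : B * Y * A = A := by
    apply Matrix.toLin'.injective
    apply LinearMap.ext
    intro v
    obtain ⟨w, hw⟩ := h1 (⟨v, rfl⟩ : A.mulVecLin v ∈ LinearMap.range A.mulVecLin)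
    simp only [Matrix.mulVecLin_apply] at hw
    rw [Matrix.toLin'_apply, Matrix.toLin'_apply, ← Matrix.mulVec_mulVec, ← hw,
      Matrix.mulVec_mulVec, b1]
  have key2 : B * Y * (A * X) = A * X := by
    rw [← Matrix.mul_assoc, key]
  have hle : colSpace (A * X) ≤ colSpace (B * Y) := by
    rintro _ ⟨v, rfl⟩
    refine ⟨(A * X) *ᵥ v, ?_⟩
    simp only [Matrix.mulVecLin_apply]
    rw [Matrix.mulVec_mulVec, key2]
  have idem : A * X * (A * X) = A * X := by
    rw [← Matrix.mul_assoc, a1]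
  refine ⟨hle, ?_, ?_⟩
  · rw [a3, b3]; exact hle
  · rw [a3, b3, Matrix.mul_assoc, key2, idem, idem]
end
end

section
/- Let A, B ∈ ℂ^{m×n}. If A *≤ B (A is below B under the left star partial order), then A ≤⋄ B. -/
open Matrix

noncomputable section

theorem left_star_implies_diamond {m n : ℕ} (A B : Matrix (Fin m) (Fin n) ℂ)
    (h : leftStarLE A B) : diamondLE A B := by
  obtain ⟨h1, h2⟩ := h
  have h3 : Aᴴ * A = Bᴴ * A := by
    have := congrArg Matrix.conjTranspose h1
    simpa [Matrix.conjTranspose_mul] using this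
  refine ⟨h2, ?_, ?_⟩
  · have hle : colSpace (Aᴴ * A) ≤ colSpace Aᴴ := by
      unfold colSpace
      rw [Matrix.mulVecLin_mul]
      exact LinearMap.range_comp_le_range _ _
    have heq : colSpace (Aᴴ * A) = colSpace Aᴴ := by
      apply Submodule.eq_of_le_of_finrank_eq hle
      change (Aᴴ * A).rank = Aᴴ.rank
      open scoped ComplexOrder in
      rw [Matrix.rank_conjTranspose_mul_self, Matrix.rank_conjTranspose]
    rw [← heq, h3]
    unfold colSpace
    rw [Matrix.mulVecLin_mul]
    exact LinearMap.range_comp_le_range _ _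
  · rw [Matrix.mul_assoc, ← h3, Matrix.mul_assoc]
end
end

section
/- Let A, B ∈ ℂ^{m×n}. If A ≤* B under the right star partial order (i.e., AA* = BA* and R(A*) ⊆ R(B*)), then A ≤⋄ B. -/
open Matrix

noncomputable section

theorem right_star_implies_diamond {m n : ℕ} (A B : Matrix (Fin m) (Fin n) ℂ)
    (h : rightStarLE A B) : diamondLE A B := by
  obtain ⟨h1, h2⟩ := h
  have h3 : A * Bᴴ = A * Aᴴ := by
    have := congrArg conjTranspose h1
    simpa using this.symm
  refine ⟨?_, h2, by rw [h3]⟩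
  have hle : LinearMap.range (A * Aᴴ).mulVecLin ≤ LinearMap.range A.mulVecLin := by
    rw [Matrix.mulVecLin_mul]
    exact LinearMap.range_comp_le_range _ _
  open scoped ComplexOrder in
  have heq : LinearMap.range (A * Aᴴ).mulVecLin = LinearMap.range A.mulVecLin :=
    Submodule.eq_of_le_of_finrank_eq hle (Matrix.rank_self_mul_conjTranspose A)
  unfold colSpace
  rw [← heq, h1, Matrix.mulVecLin_mul]
  exact LinearMap.range_comp_le_range _ _
end
end

section
/- Let A, B ∈ ℂ^{m×n}, and let X ∈ ℂ^{n×m} be the Moore–Penrose inverse of A. Then the following are equivalent: (a) A *≤ B; (b) A ≤⋄ B and A*A = A*B; (c) A ≤⋄ B and XA = XB; (d) A ≤⋄ B and A*B is Hermitian (i.e., (A*B)* = A*B). -/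
open Matrix

noncomputable section

theorem left_star_iff_diamond {m n : ℕ} (A B : Matrix (Fin m) (Fin n) ℂ)
    (X : Matrix (Fin n) (Fin m) ℂ) (hX : IsMP A X) :
    (leftStarLE A B ↔ (diamondLE A B ∧ Aᴴ * A = Aᴴ * B)) ∧
    (leftStarLE A B ↔ (diamondLE A B ∧ X * A = X * B)) ∧
    (leftStarLE A B ↔ (diamondLE A B ∧ (Aᴴ * B)ᴴ = Aᴴ * B)) := by
  obtain ⟨h1, h2, h3, h4⟩ := hX
  have e1 : Xᴴ * Aᴴ = A * X := by rw [← conjTranspose_mul, h3]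
  have e1' : Aᴴ * Xᴴ = X * A := by rw [← conjTranspose_mul, h4]
  have k1 : X * Xᴴ * Aᴴ = X := by rw [Matrix.mul_assoc, e1, ← Matrix.mul_assoc, h2]
  have k2 : Aᴴ * A * X = Aᴴ := by
    have := congrArg conjTranspose h1
    rw [conjTranspose_mul, h3, ← Matrix.mul_assoc] at this
    exact this
  have k3 : X * A * Aᴴ = Aᴴ := by
    have := congrArg conjTranspose h1
    rw [Matrix.mul_assoc, conjTranspose_mul, h4] at this
    exact this
  have key : leftStarLE A B → diamondLE A B := by
    rintro ⟨h, hr⟩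
    have hc : Aᴴ * A = Bᴴ * A := by
      have := congrArg conjTranspose h
      simpa [conjTranspose_mul] using this
    refine ⟨hr, ?_, ?_⟩
    · have hA : Aᴴ = Bᴴ * (A * X) := by
        rw [← Matrix.mul_assoc, ← hc, k2]
      rintro _ ⟨v, rfl⟩
      refine ⟨(A * X) *ᵥ v, ?_⟩
      simp only [mulVecLin_apply, mulVec_mulVec]
      rw [← hA]
    · rw [Matrix.mul_assoc, Matrix.mul_assoc, hc]
  have kb : Aᴴ * A = Aᴴ * B ↔ X * A = X * B := by
    constructor
    · intro h
      rw [← k1, Matrix.mul_assoc, Matrix.mul_assoc _ _ B, h]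
    · intro h
      rw [← k2, Matrix.mul_assoc, Matrix.mul_assoc _ _ B, h]
  refine ⟨⟨fun h => ⟨key h, h.1⟩, fun h => ⟨h.2, h.1.1⟩⟩,
    ⟨fun h => ⟨key h, kb.1 h.1⟩, fun h => ⟨kb.2 h.2, h.1.1⟩⟩,
    ⟨fun h => ⟨key h, ?_⟩, fun h => ⟨?_, h.1.1⟩⟩⟩
  · rw [← h.1]
    simp [conjTranspose_mul]
  · obtain ⟨⟨_, _, hd⟩, hh⟩ := h
    rw [conjTranspose_mul, conjTranspose_conjTranspose] at hh
    rw [Matrix.mul_assoc, hh, Matrix.mul_assoc] at hd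
    rw [← k3, Matrix.mul_assoc, Matrix.mul_assoc, Matrix.mul_assoc, Matrix.mul_assoc, hd]
end
end

section
/- Let A, B ∈ ℂ^{m×n}, and let X ∈ ℂ^{n×m} be the Moore–Penrose inverse of A. Then the following are equivalent: (a) A is below B under the right star partial order (AA* = BA* and R(A*) ⊆ R(B*)); (b) A ≤⋄ B and AA* = BA*; (c) A ≤⋄ B and AX = BX; (d) A ≤⋄ B and BA* is Hermitian (i.e., (BA*)* = BA*). -/
open Matrix

noncomputable section

theorem right_star_iff_diamond {m n : ℕ} (A B : Matrix (Fin m) (Fin n) ℂ)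
    (X : Matrix (Fin n) (Fin m) ℂ) (hX : IsMP A X) :
    (rightStarLE A B ↔ (diamondLE A B ∧ A * Aᴴ = B * Aᴴ)) ∧
    (rightStarLE A B ↔ (diamondLE A B ∧ A * X = B * X)) ∧
    (rightStarLE A B ↔ (diamondLE A B ∧ (B * Aᴴ)ᴴ = B * Aᴴ)) := by
  obtain ⟨h1, h2, h3, h4⟩ := hX
  have e1 : A * Aᴴ * Xᴴ = A := by
    rw [Matrix.mul_assoc, ← conjTranspose_mul, h4, ← Matrix.mul_assoc, h1]
  have e2 : Aᴴ * (A * X) = Aᴴ := by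
    conv_rhs => rw [← h1, conjTranspose_mul, h3]
  have e3 : X * A * Aᴴ = Aᴴ := by
    conv_rhs => rw [← h1, Matrix.mul_assoc, conjTranspose_mul, h4]
  have e4 : Aᴴ * (Xᴴ * X) = X := by
    rw [← Matrix.mul_assoc, ← conjTranspose_mul, h4, h2]
  have key : rightStarLE A B → diamondLE A B := by
    rintro ⟨h, hr⟩
    refine ⟨?_, hr, ?_⟩
    · have hA : A = B * (Aᴴ * Xᴴ) := by
        rw [← Matrix.mul_assoc, ← h, e1]
      rintro _ ⟨v, rfl⟩
      refine ⟨(Aᴴ * Xᴴ) *ᵥ v, ?_⟩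
      simp only [mulVecLin_apply, mulVec_mulVec]
      rw [← hA]
    · have := congrArg conjTranspose h
      simp only [conjTranspose_mul, conjTranspose_conjTranspose] at this
      rw [this]
  refine ⟨⟨fun h => ⟨key h, h.1⟩, fun h => ⟨h.2, h.1.2.1⟩⟩,
    ⟨fun h => ⟨key h, ?_⟩, fun h => ⟨?_, h.1.2.1⟩⟩,
    ⟨fun h => ⟨key h, ?_⟩, fun h => ⟨?_, h.1.2.1⟩⟩⟩
  · rw [← e4, ← Matrix.mul_assoc, ← Matrix.mul_assoc, h.1]; simp only [Matrix.mul_assoc]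
  · rw [← e3, Matrix.mul_assoc X, ← Matrix.mul_assoc, ← Matrix.mul_assoc, h.2]; simp only [Matrix.mul_assoc]
  · rw [← h.1]; simp
  · have hd := h.1.2.2
    have hh := h.2
    rw [conjTranspose_mul, conjTranspose_conjTranspose] at hh
    rw [hh] at hd
    have := congrArg (· * X) hd
    simp only [Matrix.mul_assoc, e2] at this
    exact this.symm
end
end

section
/- Let n, r, t be natural numbers with r ≤ n, let U ∈ ℂ^{n×n} be unitary, let Σ ∈ ℂ^{r×r} be a diagonal matrix with positive real diagonal entries, let K ∈ ℂ^{r×r} and L ∈ ℂ^{r×(n−r)} satisfy KK* + LL* = I_r, let T ∈ ℂ^{r×r} be idempotent (T² = T), and let W ∈ ℂ^{r×r} be the Moore–Penrose inverse of Σ⁻¹T. Define A = U·[[W·K, W·L],[0, 0]]·U* (block rows and columns of sizes r and n−r). Then the Moore–Penrose inverse of A is U·[[K*·Σ⁻¹·T, 0],[L*·Σ⁻¹·T, 0]]·U*. -/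
open Matrix

noncomputable section

theorem mp_conj_aux {n r q : ℕ} (e : Fin r ⊕ Fin q ≃ Fin n)
    (U : Matrix (Fin n) (Fin n) ℂ) (hU : Uᴴ * U = 1)
    (P Q : Matrix (Fin r ⊕ Fin q) (Fin r ⊕ Fin q) ℂ)
    (h1 : P * Q * P = P) (h2 : Q * P * Q = Q) (h3 : (P * Q)ᴴ = P * Q) (h4 : (Q * P)ᴴ = Q * P) :
    IsMP (U * Matrix.reindex e e P * Uᴴ) (U * Matrix.reindex e e Q * Uᴴ) := by
  have key : ∀ X Y : Matrix (Fin r ⊕ Fin q) (Fin r ⊕ Fin q) ℂ,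
      (U * Matrix.reindex e e X * Uᴴ) * (U * Matrix.reindex e e Y * Uᴴ)
        = U * Matrix.reindex e e (X * Y) * Uᴴ := by
    intro X Y
    have hm : Matrix.reindex e e (X * Y) = Matrix.reindex e e X * Matrix.reindex e e Y := by
      simp [Matrix.reindex_apply, Matrix.submatrix_mul_equiv]
    rw [hm]
    calc _ = U * Matrix.reindex e e X * (Uᴴ * U) * Matrix.reindex e e Y * Uᴴ := by
          simp only [Matrix.mul_assoc]
      _ = _ := by rw [hU, Matrix.mul_one]; simp only [Matrix.mul_assoc]
  have keyH : ∀ X : Matrix (Fin r ⊕ Fin q) (Fin r ⊕ Fin q) ℂ,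
      (U * Matrix.reindex e e X * Uᴴ)ᴴ = U * Matrix.reindex e e Xᴴ * Uᴴ := by
    intro X
    simp only [Matrix.conjTranspose_mul, Matrix.conjTranspose_conjTranspose,
      Matrix.conjTranspose_reindex, Matrix.mul_assoc]
  refine ⟨?_, ?_, ?_, ?_⟩
  · rw [key, key, h1]
  · rw [key, key, h2]
  · rw [key, keyH, h3]
  · rw [key, keyH, h4]

theorem mp_of_diamond_predecessor {n r t : ℕ} (hrn : r ≤ n)
    (U : Matrix (Fin n) (Fin n) ℂ) (hU : U * Uᴴ = 1)
    (S : Matrix (Fin r) (Fin r) ℂ) (d : Fin r → ℝ) (hd : ∀ i, 0 < d i)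
    (hS : S = Matrix.diagonal fun i => (d i : ℂ))
    (K : Matrix (Fin r) (Fin r) ℂ) (L : Matrix (Fin r) (Fin (n - r)) ℂ)
    (hKL : K * Kᴴ + L * Lᴴ = 1)
    (T : Matrix (Fin r) (Fin r) ℂ) (hT : T * T = T)
    (W : Matrix (Fin r) (Fin r) ℂ) (hW : IsMP (S⁻¹ * T) W)
    (A : Matrix (Fin n) (Fin n) ℂ)
    (hA : A = U * (Matrix.reindex (finPairEquiv hrn) (finPairEquiv hrn)
        (Matrix.fromBlocks (W * K) (W * L) 0 0)) * Uᴴ) :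
    IsMP A (U * (Matrix.reindex (finPairEquiv hrn) (finPairEquiv hrn)
        (Matrix.fromBlocks (Kᴴ * S⁻¹ * T) 0 (Lᴴ * S⁻¹ * T) 0)) * Uᴴ) := by
  obtain ⟨w1, w2, w3, w4⟩ := hW
  subst hA
  rw [Matrix.mul_assoc Kᴴ, Matrix.mul_assoc Lᴴ]
  generalize S⁻¹ * T = N at *
  have hPQ : Matrix.fromBlocks (W * K) (W * L) 0 0 * Matrix.fromBlocks (Kᴴ * N) 0 (Lᴴ * N) 0
      = Matrix.fromBlocks (W * N) 0 0 (0 : Matrix (Fin (n - r)) (Fin (n - r)) ℂ) := by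
    have : W * K * (Kᴴ * N) + W * L * (Lᴴ * N) = W * N := by
      calc _ = W * (K * Kᴴ + L * Lᴴ) * N := by
            simp only [Matrix.mul_add, Matrix.add_mul, Matrix.mul_assoc]
        _ = _ := by rw [hKL, Matrix.mul_one]
    rw [Matrix.fromBlocks_multiply, this]
    simp
  apply mp_conj_aux _ _ (mul_eq_one_comm.mp hU)
  · rw [hPQ, Matrix.fromBlocks_multiply]
    simp [← Matrix.mul_assoc, w2]
  · rw [Matrix.mul_assoc, hPQ, Matrix.fromBlocks_multiply]
    simp [Matrix.mul_assoc, (Matrix.mul_assoc N W N).symm.trans w1]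
  · rw [hPQ, Matrix.fromBlocks_conjTranspose, w4]
    simp
  · have w3' : Wᴴ * Nᴴ = N * W := by rw [← Matrix.conjTranspose_mul, w3]
    have w5 : ∀ {k : ℕ} (X : Matrix (Fin r) (Fin k) ℂ), Wᴴ * (Nᴴ * X) = N * (W * X) := by
      intro k X
      rw [← Matrix.mul_assoc, w3', Matrix.mul_assoc]
    rw [Matrix.fromBlocks_multiply, Matrix.fromBlocks_conjTranspose]
    simp [Matrix.mul_assoc, w5]
end
end

section
/- Let n, r be natural numbers with r ≤ n, let U ∈ ℂ^{n×n} be unitary, let Σ ∈ ℂ^{r×r} be a diagonal matrix with positive real diagonal entries, let K ∈ ℂ^{r×r} and L ∈ ℂ^{r×(n−r)} satisfy KK* + LL* = I_r, let T ∈ ℂ^{r×r} be idempotent (T² = T), and let W ∈ ℂ^{r×r} be the Moore–Penrose inverse of Σ⁻¹T. Define B = U·[[Σ·K, Σ·L],[0, 0]]·U* and A = U·[[W·K, W·L],[0, 0]]·U* (block rows and columns of sizes r and n−r), so that A ≤⋄ B, the Moore–Penrose inverse of B is B† = U·[[K*·Σ⁻¹, 0],[L*·Σ⁻¹, 0]]·U*,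 and the Moore–Penrose inverse of A is A† = U·[[K*·Σ⁻¹·T, 0],[L*·Σ⁻¹·T, 0]]·U*. Then B†·A† is the Moore–Penrose inverse of A·B if and only if Σ⁻¹·K*·Σ⁻¹·T is the Moore–Penrose inverse of W·K·Σ. -/
open Matrix

noncomputable section

theorem isMP_conj_aux {n r : ℕ} (P Q : Matrix (Fin n) (Fin r) ℂ) (hP : Pᴴ * P = 1)
    (hQ : Qᴴ * Q = 1) (M X : Matrix (Fin r) (Fin r) ℂ) :
    IsMP (P * M * Qᴴ) (Q * X * Pᴴ) ↔ IsMP M X := by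
  have cP : ∀ Y Z : Matrix (Fin r) (Fin r) ℂ, P * Y * Qᴴ = P * Z * Qᴴ → Y = Z := by
    intro Y Z h
    have h2 : Pᴴ * P * Y * (Qᴴ * Q) = Pᴴ * P * Z * (Qᴴ * Q) := by
      have := congrArg (fun t => Pᴴ * t * Q) h
      simpa only [Matrix.mul_assoc] using this
    simpa [hP, hQ] using h2
  have cQ : ∀ Y Z : Matrix (Fin r) (Fin r) ℂ, Q * Y * Pᴴ = Q * Z * Pᴴ → Y = Z := by
    intro Y Z h
    have h2 : Qᴴ * Q * Y * (Pᴴ * P) = Qᴴ * Q * Z * (Pᴴ * P) := by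
      have := congrArg (fun t => Qᴴ * t * P) h
      simpa only [Matrix.mul_assoc] using this
    simpa [hP, hQ] using h2
  have cc : ∀ R : Matrix (Fin n) (Fin r) ℂ, Rᴴ * R = 1 →
      ∀ Y Z : Matrix (Fin r) (Fin r) ℂ, R * Y * Rᴴ = R * Z * Rᴴ → Y = Z := by
    intro R hR Y Z h
    have h2 : Rᴴ * R * Y * (Rᴴ * R) = Rᴴ * R * Z * (Rᴴ * R) := by
      have := congrArg (fun t => Rᴴ * t * R) h
      simpa only [Matrix.mul_assoc] using this
    simpa [hR] using h2
  have e1 : P * M * Qᴴ * (Q * X * Pᴴ) = P * (M * X) * Pᴴ := by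
    calc _ = P * M * (Qᴴ * Q) * X * Pᴴ := by simp only [Matrix.mul_assoc]
      _ = _ := by rw [hQ]; simp only [Matrix.mul_assoc, Matrix.one_mul]
  have e2 : Q * X * Pᴴ * (P * M * Qᴴ) = Q * (X * M) * Qᴴ := by
    calc _ = Q * X * (Pᴴ * P) * M * Qᴴ := by simp only [Matrix.mul_assoc]
      _ = _ := by rw [hP]; simp only [Matrix.mul_assoc, Matrix.one_mul]
  have e3 : P * (M * X) * Pᴴ * (P * M * Qᴴ) = P * (M * X * M) * Qᴴ := by
    calc _ = P * (M * X) * (Pᴴ * P) * M * Qᴴ := by simp only [Matrix.mul_assoc]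
      _ = _ := by rw [hP]; simp only [Matrix.mul_assoc, Matrix.one_mul]
  have e4 : Q * (X * M) * Qᴴ * (Q * X * Pᴴ) = Q * (X * M * X) * Pᴴ := by
    calc _ = Q * (X * M) * (Qᴴ * Q) * X * Pᴴ := by simp only [Matrix.mul_assoc]
      _ = _ := by rw [hQ]; simp only [Matrix.mul_assoc, Matrix.one_mul]
  have e5 : ∀ (R : Matrix (Fin n) (Fin r) ℂ) (Y : Matrix (Fin r) (Fin r) ℂ),
      (R * Y * Rᴴ)ᴴ = R * Yᴴ * Rᴴ := by
    intro R Y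
    simp only [conjTranspose_mul, conjTranspose_conjTranspose, Matrix.mul_assoc]
  unfold IsMP
  rw [e1, e2, e3, e4, e5, e5]
  constructor
  · rintro ⟨h1, h2, h3, h4⟩
    exact ⟨cP _ _ h1, cQ _ _ h2, cc P hP _ _ h3, cc Q hQ _ _ h4⟩
  · rintro ⟨h1, h2, h3, h4⟩
    exact ⟨by rw [h1], by rw [h2], by rw [h3], by rw [h4]⟩

theorem reverse_order_law_diamond {n r : ℕ} (hrn : r ≤ n)
    (U : Matrix (Fin n) (Fin n) ℂ) (hU : U * Uᴴ = 1)
    (S : Matrix (Fin r) (Fin r) ℂ) (d : Fin r → ℝ) (hd : ∀ i, 0 < d i)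
    (hS : S = Matrix.diagonal fun i => (d i : ℂ))
    (K : Matrix (Fin r) (Fin r) ℂ) (L : Matrix (Fin r) (Fin (n - r)) ℂ)
    (hKL : K * Kᴴ + L * Lᴴ = 1)
    (T : Matrix (Fin r) (Fin r) ℂ) (hT : T * T = T)
    (W : Matrix (Fin r) (Fin r) ℂ) (hW : IsMP (S⁻¹ * T) W)
    (A B Ad Bd : Matrix (Fin n) (Fin n) ℂ)
    (hB : B = U * (Matrix.reindex (finPairEquiv hrn) (finPairEquiv hrn)
        (Matrix.fromBlocks (S * K) (S * L) 0 0)) * Uᴴ)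
    (hA : A = U * (Matrix.reindex (finPairEquiv hrn) (finPairEquiv hrn)
        (Matrix.fromBlocks (W * K) (W * L) 0 0)) * Uᴴ)
    (hdiam : diamondLE A B)
    (hBd : Bd = U * (Matrix.reindex (finPairEquiv hrn) (finPairEquiv hrn)
        (Matrix.fromBlocks (Kᴴ * S⁻¹) 0 (Lᴴ * S⁻¹) 0)) * Uᴴ)
    (hBdMP : IsMP B Bd)
    (hAd : Ad = U * (Matrix.reindex (finPairEquiv hrn) (finPairEquiv hrn)
        (Matrix.fromBlocks (Kᴴ * S⁻¹ * T) 0 (Lᴴ * S⁻¹ * T) 0)) * Uᴴ)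
    (hAdMP : IsMP A Ad) :
    IsMP (A * B) (Bd * Ad) ↔ IsMP (W * K * S) (S⁻¹ * Kᴴ * S⁻¹ * T) := by
  have hU' : Uᴴ * U = 1 := mul_eq_one_comm.mp hU
  set e := finPairEquiv hrn with he
  let E : Matrix (Fin n) (Fin r) ℂ := (fromRows 1 0 : Matrix (Fin r ⊕ Fin (n - r)) (Fin r) ℂ).submatrix e.symm id
  let V : Matrix (Fin r) (Fin n) ℂ := (fromCols K L).submatrix id e.symm
  have hEH : Eᴴ = (fromCols 1 0 : Matrix (Fin r) (Fin r ⊕ Fin (n - r)) ℂ).submatrix id e.symm := by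
    simp [E, conjTranspose_submatrix, conjTranspose_fromRows_eq_fromCols_conjTranspose]
  have hVH : Vᴴ = (fromRows Kᴴ Lᴴ).submatrix e.symm id := by
    simp [V, conjTranspose_submatrix, conjTranspose_fromCols_eq_fromRows_conjTranspose]
  have hEE : Eᴴ * E = 1 := by
    rw [hEH, submatrix_mul_equiv, fromCols_mul_fromRows]; simp
  have hVV : V * Vᴴ = 1 := by
    rw [hVH, submatrix_mul_equiv, fromCols_mul_fromRows, hKL]; simp
  have hVE : V * E = K := by
    rw [submatrix_mul_equiv, fromCols_mul_fromRows]; simp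
  have hEV : Eᴴ * Vᴴ = Kᴴ := by
    rw [← conjTranspose_mul, hVE]
  have f1 : ∀ Y : Matrix (Fin r) (Fin r) ℂ,
      Matrix.reindex e e (fromBlocks (Y * K) (Y * L) 0 0) = E * Y * V := by
    intro Y
    have : fromBlocks (Y * K) (Y * L) 0 0
        = (fromRows 1 0 : Matrix (Fin r ⊕ Fin (n - r)) (Fin r) ℂ) * Y * fromCols K L := by
      rw [fromRows_mul, fromRows_mul_fromCols]; simp
    rw [this]
    rfl
  have f2 : ∀ Y : Matrix (Fin r) (Fin r) ℂ,
      Matrix.reindex e e (fromBlocks (Kᴴ * Y) 0 (Lᴴ * Y) 0) = Vᴴ * Y * Eᴴ := by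
    intro Y
    have : fromBlocks (Kᴴ * Y) 0 (Lᴴ * Y) 0
        = (fromRows Kᴴ Lᴴ) * Y * (fromCols 1 0 : Matrix (Fin r) (Fin r ⊕ Fin (n - r)) ℂ) := by
      rw [fromRows_mul, fromRows_mul_fromCols]; simp
    rw [this, hEH, hVH]
    rfl
  have gAB : A * B = (U * E) * (W * K * S) * (U * Vᴴ)ᴴ := by
    rw [hA, hB, f1, f1, conjTranspose_mul, conjTranspose_conjTranspose]
    calc _ = U * E * W * V * (Uᴴ * U) * E * S * V * Uᴴ := by simp only [Matrix.mul_assoc]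
      _ = U * E * W * (V * E) * S * V * Uᴴ := by
        rw [hU', Matrix.mul_one]; simp only [Matrix.mul_assoc]
      _ = _ := by rw [hVE]; simp only [Matrix.mul_assoc]
  have gX : Bd * Ad = (U * Vᴴ) * (S⁻¹ * Kᴴ * S⁻¹ * T) * (U * E)ᴴ := by
    rw [hAd, hBd, Matrix.mul_assoc Kᴴ, Matrix.mul_assoc Lᴴ, f2, f2, conjTranspose_mul]
    calc _ = U * Vᴴ * S⁻¹ * Eᴴ * (Uᴴ * U) * Vᴴ * S⁻¹ * T * Eᴴ * Uᴴ := by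
          simp only [Matrix.mul_assoc]
      _ = U * Vᴴ * S⁻¹ * (Eᴴ * Vᴴ) * S⁻¹ * T * Eᴴ * Uᴴ := by
        rw [hU', Matrix.mul_one]; simp only [Matrix.mul_assoc]
      _ = _ := by rw [hEV]; simp only [Matrix.mul_assoc]
  rw [gAB, gX]
  apply isMP_conj_aux
  · calc _ = Eᴴ * (Uᴴ * U) * E := by rw [conjTranspose_mul]; simp only [Matrix.mul_assoc]
      _ = 1 := by rw [hU', Matrix.mul_one, hEE]
  · calc _ = V * (Uᴴ * U) * Vᴴ := by
          rw [conjTranspose_mul, conjTranspose_conjTranspose]; simp only [Matrix.mul_assoc]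
      _ = 1 := by rw [hU', Matrix.mul_one, hVV]
end
end

section
/- Let n, r be natural numbers with r ≤ n, let U ∈ ℂ^{n×n} be unitary, let Σ ∈ ℂ^{r×r} be a diagonal matrix with positive real diagonal entries, and let K ∈ ℂ^{r×r} and L ∈ ℂ^{r×(n−r)} satisfy KK* + LL* = I_r. Define B = U·[[Σ·K, Σ·L],[0, 0]]·U* (block rows and columns of sizes r and n−r), whose Moore–Penrose inverse is B† = U·[[K*·Σ⁻¹, 0],[L*·Σ⁻¹, 0]]·U*. Then (B†)² is the Moore–Penrose inverse of B² if and only if Σ⁻¹·K*·Σ⁻¹ is the Moore–Penrose inverse of Σ·K·Σ. -/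
open Matrix

noncomputable section

theorem isMP_iff_aux {n r : ℕ} (V : Matrix (Fin n) (Fin r) ℂ) (Z : Matrix (Fin r) (Fin n) ℂ)
    (hV : Vᴴ * V = 1) (hZ : Z * Zᴴ = 1) (M X : Matrix (Fin r) (Fin r) ℂ) :
    IsMP (V * M * Z) (Zᴴ * X * Vᴴ) ↔ IsMP M X := by
  have inj : ∀ A C : Matrix (Fin r) (Fin r) ℂ, V * A * Z = V * C * Z ↔ A = C := by
    intro A C
    refine ⟨fun h => ?_, fun h => by rw [h]⟩
    have h2 : (Vᴴ * V) * A * (Z * Zᴴ) = (Vᴴ * V) * C * (Z * Zᴴ) := by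
      have := congrArg (fun T => Vᴴ * T * Zᴴ) h
      simpa only [Matrix.mul_assoc] using this
    simpa [hV, hZ] using h2
  have inj2 : ∀ A C : Matrix (Fin r) (Fin r) ℂ, Zᴴ * A * Vᴴ = Zᴴ * C * Vᴴ ↔ A = C := by
    intro A C
    refine ⟨fun h => ?_, fun h => by rw [h]⟩
    have h2 : (Z * Zᴴ) * A * (Vᴴ * V) = (Z * Zᴴ) * C * (Vᴴ * V) := by
      have := congrArg (fun T => Z * T * V) h
      simpa only [Matrix.mul_assoc] using this
    simpa [hV, hZ] using h2
  have inj3 : ∀ A C : Matrix (Fin r) (Fin r) ℂ, V * A * Vᴴ = V * C * Vᴴ ↔ A = C := by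
    intro A C
    refine ⟨fun h => ?_, fun h => by rw [h]⟩
    have h2 : (Vᴴ * V) * A * (Vᴴ * V) = (Vᴴ * V) * C * (Vᴴ * V) := by
      have := congrArg (fun T => Vᴴ * T * V) h
      simpa only [Matrix.mul_assoc] using this
    simpa [hV] using h2
  have inj4 : ∀ A C : Matrix (Fin r) (Fin r) ℂ, Zᴴ * A * Z = Zᴴ * C * Z ↔ A = C := by
    intro A C
    refine ⟨fun h => ?_, fun h => by rw [h]⟩
    have h2 : (Z * Zᴴ) * A * (Z * Zᴴ) = (Z * Zᴴ) * C * (Z * Zᴴ) := by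
      have := congrArg (fun T => Z * T * Zᴴ) h
      simpa only [Matrix.mul_assoc] using this
    simpa [hZ] using h2
  have e1 : V * M * Z * (Zᴴ * X * Vᴴ) = V * (M * X) * Vᴴ := by
    calc _ = V * M * (Z * Zᴴ) * X * Vᴴ := by simp only [Matrix.mul_assoc]
      _ = _ := by rw [hZ]; simp only [Matrix.mul_assoc, Matrix.one_mul]
  have e2 : Zᴴ * X * Vᴴ * (V * M * Z) = Zᴴ * (X * M) * Z := by
    calc _ = Zᴴ * X * (Vᴴ * V) * M * Z := by simp only [Matrix.mul_assoc]
      _ = _ := by rw [hV]; simp only [Matrix.mul_assoc, Matrix.one_mul]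
  have e3 : V * (M * X) * Vᴴ * (V * M * Z) = V * (M * X * M) * Z := by
    calc _ = V * (M * X) * (Vᴴ * V) * M * Z := by simp only [Matrix.mul_assoc]
      _ = _ := by rw [hV]; simp only [Matrix.mul_assoc, Matrix.one_mul]
  have e4 : Zᴴ * (X * M) * Z * (Zᴴ * X * Vᴴ) = Zᴴ * (X * M * X) * Vᴴ := by
    calc _ = Zᴴ * (X * M) * (Z * Zᴴ) * X * Vᴴ := by simp only [Matrix.mul_assoc]
      _ = _ := by rw [hZ]; simp only [Matrix.mul_assoc, Matrix.one_mul]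
  have e5 : (V * (M * X) * Vᴴ)ᴴ = V * (M * X)ᴴ * Vᴴ := by
    rw [conjTranspose_mul, conjTranspose_mul V, conjTranspose_conjTranspose, Matrix.mul_assoc]
  have e6 : (Zᴴ * (X * M) * Z)ᴴ = Zᴴ * (X * M)ᴴ * Z := by
    rw [conjTranspose_mul, conjTranspose_mul Zᴴ, conjTranspose_conjTranspose, Matrix.mul_assoc]
  unfold IsMP
  rw [e1, e2, e3, e4, e5, e6, inj, inj2, inj3, inj4]

theorem bi_dagger_characterization {n r : ℕ} (hrn : r ≤ n)
    (U : Matrix (Fin n) (Fin n) ℂ) (hU : U * Uᴴ = 1)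
    (S : Matrix (Fin r) (Fin r) ℂ) (d : Fin r → ℝ) (hd : ∀ i, 0 < d i)
    (hS : S = Matrix.diagonal fun i => (d i : ℂ))
    (K : Matrix (Fin r) (Fin r) ℂ) (L : Matrix (Fin r) (Fin (n - r)) ℂ)
    (hKL : K * Kᴴ + L * Lᴴ = 1)
    (B Bd : Matrix (Fin n) (Fin n) ℂ)
    (hB : B = U * (Matrix.reindex (finPairEquiv hrn) (finPairEquiv hrn)
        (Matrix.fromBlocks (S * K) (S * L) 0 0)) * Uᴴ)
    (hBd : Bd = U * (Matrix.reindex (finPairEquiv hrn) (finPairEquiv hrn)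
        (Matrix.fromBlocks (Kᴴ * S⁻¹) 0 (Lᴴ * S⁻¹) 0)) * Uᴴ)
    (hBdMP : IsMP B Bd) :
    IsMP (B * B) (Bd * Bd) ↔ IsMP (S * K * S) (S⁻¹ * Kᴴ * S⁻¹) := by
  have hU' : Uᴴ * U = 1 := mul_eq_one_comm.mp hU
  set e := finPairEquiv hrn with he
  obtain ⟨P, hP⟩ : ∃ P : Matrix (Fin n) (Fin r) ℂ,
      P = (Matrix.fromRows (1 : Matrix (Fin r) (Fin r) ℂ)
        (0 : Matrix (Fin (n - r)) (Fin r) ℂ)).submatrix e.symm id := ⟨_, rfl⟩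
  obtain ⟨Q, hQ⟩ : ∃ Q : Matrix (Fin r) (Fin n) ℂ,
      Q = (Matrix.fromCols K L).submatrix id e.symm := ⟨_, rfl⟩
  have hPP : Pᴴ * P = 1 := by
    rw [hP, conjTranspose_submatrix, submatrix_mul_equiv, conjTranspose_fromRows_eq_fromCols_conjTranspose,
      fromCols_mul_fromRows]
    simp
  have hQP : Q * P = K := by
    rw [hP, hQ, submatrix_mul_equiv, fromCols_mul_fromRows]
    simp
  have hQQ : Q * Qᴴ = 1 := by
    rw [hQ, conjTranspose_submatrix, submatrix_mul_equiv,
      conjTranspose_fromCols_eq_fromRows_conjTranspose, fromCols_mul_fromRows, hKL]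
    simp
  have hb1 : Matrix.reindex e e (Matrix.fromBlocks (S * K) (S * L) 0 0) = P * S * Q := by
    rw [hP, hQ]
    ext i j
    obtain ⟨i, rfl⟩ := e.surjective i
    obtain ⟨j, rfl⟩ := e.surjective j
    rcases i with i | i <;> rcases j with j | j <;>
      simp [Matrix.mul_apply, Matrix.one_apply]
  have hb2 : Matrix.reindex e e (Matrix.fromBlocks (Kᴴ * S⁻¹) 0 (Lᴴ * S⁻¹) 0)
      = Qᴴ * S⁻¹ * Pᴴ := by
    rw [hP, hQ]
    ext i j
    obtain ⟨i, rfl⟩ := e.surjective i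
    obtain ⟨j, rfl⟩ := e.surjective j
    rcases i with i | i <;> rcases j with j | j <;>
      simp [Matrix.mul_apply, Matrix.one_apply, apply_ite]
  have hQP' : Pᴴ * Qᴴ = Kᴴ := by rw [← conjTranspose_mul, hQP]
  have hBB : B * B = (U * P) * (S * K * S) * (Q * Uᴴ) := by
    rw [hB, hb1]
    calc _ = U * P * S * (Q * ((Uᴴ * U) * P)) * S * Q * Uᴴ := by simp only [Matrix.mul_assoc]
      _ = _ := by rw [hU', Matrix.one_mul, hQP]; simp only [Matrix.mul_assoc]
  have hBB' : Bd * Bd = (Q * Uᴴ)ᴴ * (S⁻¹ * Kᴴ * S⁻¹) * (U * P)ᴴ := by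
    rw [hBd, hb2]
    calc _ = U * Qᴴ * S⁻¹ * (Pᴴ * ((Uᴴ * U) * Qᴴ)) * S⁻¹ * Pᴴ * Uᴴ := by
            simp only [Matrix.mul_assoc]
      _ = _ := by
        rw [hU', Matrix.one_mul, hQP', conjTranspose_mul, conjTranspose_mul,
          conjTranspose_conjTranspose]
        simp only [Matrix.mul_assoc]
  rw [hBB, hBB']
  apply isMP_iff_aux
  · calc _ = Pᴴ * ((Uᴴ * U) * P) := by simp only [conjTranspose_mul, Matrix.mul_assoc]
      _ = 1 := by rw [hU', Matrix.one_mul, hPP]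
  · calc _ = Q * ((Uᴴ * U) * Qᴴ) := by
          simp only [conjTranspose_mul, conjTranspose_conjTranspose, Matrix.mul_assoc]
      _ = 1 := by rw [hU', Matrix.one_mul, hQQ]
end
end

section
/- Let n, r be natural numbers with r ≤ n, let U ∈ ℂ^{n×n} be unitary, let Σ ∈ ℂ^{r×r} be a diagonal matrix with positive real diagonal entries, let K ∈ ℂ^{r×r} and L ∈ ℂ^{r×(n−r)} satisfy KK* + LL* = I_r, let T ∈ ℂ^{r×r} be idempotent (T² = T), and let W ∈ ℂ^{r×r} be the Moore–Penrose inverse of Σ⁻¹T. Define B = U·[[Σ·K, Σ·L],[0, 0]]·U* and A = U·[[W·K, W·L],[0, 0]]·U* (block rows and columns of sizes r and n−r), so that A ≤⋄ B, the Moore–Penrose inverse of B is B† = U·[[K*·Σ⁻¹, 0],[L*·Σ⁻¹, 0]]·U*, and the Moore–Penrose inverse of A is A† = U·[[K*·Σ⁻¹·T, 0],[L*·Σ⁻¹·T, 0]]·U*. Then A† ≤⋄ B† if and only if T·(T* − I_r)·Σ⁻²·T = 0. -/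
open Matrix

noncomputable section

theorem aux_factor {n r : ℕ} (hrn : r ≤ n)
    (U : Matrix (Fin n) (Fin n) ℂ) (K : Matrix (Fin r) (Fin r) ℂ)
    (L : Matrix (Fin r) (Fin (n - r)) ℂ) (hU : U * Uᴴ = 1) (hKL : K * Kᴴ + L * Lᴴ = 1) :
    ∃ (C : Matrix (Fin r) (Fin n) ℂ) (E : Matrix (Fin n) (Fin r) ℂ),
      C * Cᴴ = 1 ∧ Eᴴ * E = 1 ∧ ∀ X : Matrix (Fin r) (Fin r) ℂ,
        U * (Matrix.reindex (finPairEquiv hrn) (finPairEquiv hrn)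
        (Matrix.fromBlocks (Kᴴ * X) 0 (Lᴴ * X) 0)) * Uᴴ = Cᴴ * X * Eᴴ := by
  have hU' : Uᴴ * U = 1 := mul_eq_one_comm.mp hU
  set e := finPairEquiv hrn
  let C0 : Matrix (Fin r) (Fin n) ℂ := (Matrix.fromCols K L).submatrix id e.symm
  let E0 : Matrix (Fin n) (Fin r) ℂ :=
    (Matrix.fromRows (1 : Matrix (Fin r) (Fin r) ℂ) (0 : Matrix (Fin (n-r)) (Fin r) ℂ)).submatrix e.symm id
  have h1 : C0 * C0ᴴ = 1 := by
    simp only [C0, Matrix.conjTranspose_submatrix, Matrix.submatrix_mul_equiv,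
      Matrix.conjTranspose_fromCols_eq_fromRows_conjTranspose, Matrix.fromCols_mul_fromRows, hKL]
    simp
  have h2 : E0ᴴ * E0 = 1 := by
    simp only [E0, Matrix.conjTranspose_submatrix, Matrix.submatrix_mul_equiv,
      Matrix.conjTranspose_fromRows_eq_fromCols_conjTranspose, Matrix.fromCols_mul_fromRows]
    simp
  have h3 : ∀ X : Matrix (Fin r) (Fin r) ℂ, Matrix.reindex e e
        (Matrix.fromBlocks (Kᴴ * X) 0 (Lᴴ * X) 0) = C0ᴴ * X * E0ᴴ := by
    intro X
    have : Matrix.fromBlocks (Kᴴ * X) 0 (Lᴴ * X) 0 = Matrix.fromRows Kᴴ Lᴴ * X *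
        Matrix.fromCols (1 : Matrix (Fin r) (Fin r) ℂ) (0 : Matrix (Fin r) (Fin (n-r)) ℂ) := by
      rw [Matrix.fromRows_mul, Matrix.fromRows_mul_fromCols]
      simp
    rw [this]
    simp only [C0, E0, Matrix.conjTranspose_submatrix, Matrix.reindex_apply,
      Matrix.conjTranspose_fromRows_eq_fromCols_conjTranspose,
      Matrix.conjTranspose_fromCols_eq_fromRows_conjTranspose]
    rw [Matrix.conjTranspose_one, Matrix.conjTranspose_zero]
    ext i j
    simp only [Matrix.mul_apply, Matrix.submatrix_apply, id]
  refine ⟨C0 * Uᴴ, U * E0, ?_, ?_, ?_⟩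
  · rw [Matrix.conjTranspose_mul, Matrix.conjTranspose_conjTranspose, Matrix.mul_assoc,
      ← Matrix.mul_assoc Uᴴ, hU', Matrix.one_mul, h1]
  · rw [Matrix.conjTranspose_mul, Matrix.mul_assoc,
      ← Matrix.mul_assoc Uᴴ, hU', Matrix.one_mul, h2]
  · intro X
    rw [h3]
    simp only [Matrix.conjTranspose_mul, Matrix.conjTranspose_conjTranspose, Matrix.mul_assoc]

theorem aux_colSpace {m n k : ℕ} (M : Matrix (Fin m) (Fin n) ℂ) (X : Matrix (Fin n) (Fin k) ℂ) :
    colSpace (M * X) ≤ colSpace M := by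
  unfold colSpace
  rw [Matrix.mulVecLin_mul]
  exact LinearMap.range_comp_le_range _ _

theorem diamond_of_mp_iff {n r : ℕ} (hrn : r ≤ n)
    (U : Matrix (Fin n) (Fin n) ℂ) (hU : U * Uᴴ = 1)
    (S : Matrix (Fin r) (Fin r) ℂ) (d : Fin r → ℝ) (hd : ∀ i, 0 < d i)
    (hS : S = Matrix.diagonal fun i => (d i : ℂ))
    (K : Matrix (Fin r) (Fin r) ℂ) (L : Matrix (Fin r) (Fin (n - r)) ℂ)
    (hKL : K * Kᴴ + L * Lᴴ = 1)
    (T : Matrix (Fin r) (Fin r) ℂ) (hT : T * T = T)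
    (W : Matrix (Fin r) (Fin r) ℂ) (hW : IsMP (S⁻¹ * T) W)
    (A B Ad Bd : Matrix (Fin n) (Fin n) ℂ)
    (hB : B = U * (Matrix.reindex (finPairEquiv hrn) (finPairEquiv hrn)
        (Matrix.fromBlocks (S * K) (S * L) 0 0)) * Uᴴ)
    (hA : A = U * (Matrix.reindex (finPairEquiv hrn) (finPairEquiv hrn)
        (Matrix.fromBlocks (W * K) (W * L) 0 0)) * Uᴴ)
    (hdiam : diamondLE A B)
    (hBd : Bd = U * (Matrix.reindex (finPairEquiv hrn) (finPairEquiv hrn)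
        (Matrix.fromBlocks (Kᴴ * S⁻¹) 0 (Lᴴ * S⁻¹) 0)) * Uᴴ)
    (hBdMP : IsMP B Bd)
    (hAd : Ad = U * (Matrix.reindex (finPairEquiv hrn) (finPairEquiv hrn)
        (Matrix.fromBlocks (Kᴴ * S⁻¹ * T) 0 (Lᴴ * S⁻¹ * T) 0)) * Uᴴ)
    (hAdMP : IsMP A Ad) :
    diamondLE Ad Bd ↔ T * (Tᴴ - 1) * (S⁻¹ * S⁻¹) * T = 0 := by
  obtain ⟨C, E, hC, hE, hX⟩ := aux_factor hrn U K L hU hKL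
  have hdet : IsUnit S.det := by
    rw [hS, Matrix.det_diagonal, isUnit_iff_ne_zero, Finset.prod_ne_zero_iff]
    intro i _
    exact_mod_cast (hd i).ne'
  have hSH : Sᴴ = S := by
    rw [hS, Matrix.diagonal_conjTranspose]
    congr 1
    ext i
    simp
  have hPH : (S⁻¹)ᴴ = S⁻¹ := by rw [Matrix.conjTranspose_nonsing_inv, hSH]
  have hPS : S⁻¹ * S = 1 := Matrix.nonsing_inv_mul S hdet
  have hSP : S * S⁻¹ = 1 := Matrix.mul_nonsing_inv S hdet
  rw [hX] at hBd
  rw [Matrix.mul_assoc Kᴴ, Matrix.mul_assoc Lᴴ, hX] at hAd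
  clear hX hA hB hdiam hBdMP hAdMP hS
  generalize S⁻¹ = P at *
  have hC' : ∀ {k : ℕ} (X : Matrix (Fin r) (Fin k) ℂ), C * (Cᴴ * X) = X := fun X => by
    rw [← Matrix.mul_assoc, hC, Matrix.one_mul]
  have hE' : ∀ {k : ℕ} (X : Matrix (Fin r) (Fin k) ℂ), Eᴴ * (E * X) = X := fun X => by
    rw [← Matrix.mul_assoc, hE, Matrix.one_mul]
  have hP' : ∀ {k : ℕ} (X : Matrix (Fin r) (Fin k) ℂ), P * (S * X) = X := fun X => by
    rw [← Matrix.mul_assoc, hPS, Matrix.one_mul]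
  have hS' : ∀ {k : ℕ} (X : Matrix (Fin r) (Fin k) ℂ), S * (P * X) = X := fun X => by
    rw [← Matrix.mul_assoc, hSP, Matrix.one_mul]
  have e1 : Ad * Bdᴴ * Ad = Cᴴ * (P * (T * (P * (P * (T * Eᴴ))))) := by
    rw [hAd, hBd]
    simp only [Matrix.conjTranspose_mul, Matrix.conjTranspose_conjTranspose, Matrix.mul_assoc,
      hPH, hE', hC']
  have e2 : Ad * Adᴴ * Ad = Cᴴ * (P * (T * (Tᴴ * (P * (P * (T * Eᴴ)))))) := by
    rw [hAd]
    simp only [Matrix.conjTranspose_mul, Matrix.conjTranspose_conjTranspose, Matrix.mul_assoc,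
      hPH, hE', hC']
  have e3 : T * (Tᴴ - 1) * (P * P) * T = T * (Tᴴ * (P * (P * T))) - T * (P * (P * T)) := by
    simp only [Matrix.mul_sub, Matrix.sub_mul, Matrix.mul_one, Matrix.mul_assoc]
  rw [e3, sub_eq_zero]
  constructor
  · rintro ⟨-, -, h⟩
    rw [e1, e2] at h
    have h2 := congrArg (fun M => S * (C * (M * E))) h
    simp only [Matrix.mul_assoc, hE, Matrix.mul_one, hC', hS'] at h2
    exact h2.symm
  · intro h
    refine ⟨?_, ?_, ?_⟩
    · have : Ad = Bd * (E * T * Eᴴ) := by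
        rw [hAd, hBd]
        simp only [Matrix.mul_assoc, hE']
      rw [this]
      exact aux_colSpace _ _
    · have : Adᴴ = Bdᴴ * (Cᴴ * S * Tᴴ * P * C) := by
        rw [hAd, hBd]
        simp only [Matrix.conjTranspose_mul, Matrix.conjTranspose_conjTranspose, Matrix.mul_assoc,
          hPH, hC', hP']
      rw [this]
      exact aux_colSpace _ _
    · rw [e1, e2]
      have h2 := congrArg (fun M => Cᴴ * (P * (M * Eᴴ))) h
      simp only [Matrix.mul_assoc] at h2
      exact h2.symm
end
end
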